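/- Let d ≥ 1, β > 0, α > 0, let g : ℝ^d → ℝ be continuous, v* ∈ ℝ^d, and let ρ be a Borel probability measure on ℝ^d with v* ∈ supp(ρ) and ∫ ‖v − v*‖ dρ(v) < ∞. Set g* := g(v*) and, for r > 0, g_r := sup_{v ∈ B_r(v*)} g(v) − g*. Suppose there exist g_∞ > 0, R₀ > 0, η > 0 and ν ∈ (0,∞) such that g(v) − g* ≥ (η·‖v − v*‖)^{1/ν} − β for all v ∈ B_{R₀}(v*), and g(v) − g* > g_∞ for all v ∉ B_{R₀}(v*). Then for every r ∈ (0, R₀] and every q > β with q − β + g_r ≤ g_∞: ‖v_α(ρ) − v*‖ ≤ (q + g_r)^ν / η + (e^{−α(q − β)} / ρ(B_r(v*))) · ∫ ‖v − v*‖ dρ(v). -/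

import Mathlib

open MeasureTheory Metric

/-- The error of a weighted mean is controlled by the weighted mean distance: if
`f w * ‖w - a‖ ≤ A * f w + c * ‖w - a‖` pointwise and the weight has total mass at least `m > 0`,
then the mean is within `A + c / m * ∫ ‖w - a‖` of `a`. -/
lemma norm_weightedMean_sub_le {E : Type*} [NormedAddCommGroup E] [NormedSpace ℝ E]
    [CompleteSpace E] [MeasurableSpace E] {ρ : Measure E} {f : E → ℝ} {a : E} {A c m : ℝ}
    (hf0 : ∀ w, 0 ≤ f w) (hf : Integrable f ρ) (hfa : Integrable (fun w => f w • (w - a)) ρ)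
    (hmom : Integrable (fun w => ‖w - a‖) ρ) (hc : 0 ≤ c) (hm : 0 < m) (hmf : m ≤ ∫ w, f w ∂ρ)
    (hpt : ∀ w, f w * ‖w - a‖ ≤ A * f w + c * ‖w - a‖) :
    ‖(∫ w, f w ∂ρ)⁻¹ • ∫ w, f w • w ∂ρ - a‖ ≤ A + c / m * ∫ w, ‖w - a‖ ∂ρ := by
  set Z := ∫ w, f w ∂ρ with hZ
  have hZ0 : 0 < Z := hm.trans_le hmf
  have hsplit : ∫ w, f w • w ∂ρ = (∫ w, f w • (w - a) ∂ρ) + Z • a := by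
    rw [hZ, ← integral_smul_const, ← integral_add hfa (hf.smul_const a)]
    simp only [smul_sub, sub_add_cancel]
  have hmean : Z⁻¹ • ∫ w, f w • w ∂ρ - a = Z⁻¹ • ∫ w, f w • (w - a) ∂ρ := by
    rw [hsplit, smul_add, inv_smul_smul₀ hZ0.ne', add_sub_cancel_right]
  have hbound : ‖∫ w, f w • (w - a) ∂ρ‖ ≤ A * Z + c * ∫ w, ‖w - a‖ ∂ρ := by
    rw [hZ, ← integral_const_mul, ← integral_const_mul,
      ← integral_add (hf.const_mul A) (hmom.const_mul c)]
    refine norm_integral_le_of_norm_le ((hf.const_mul A).add (hmom.const_mul c)) (.of_forall ?_)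
    intro w
    rw [norm_smul, Real.norm_of_nonneg (hf0 w)]
    exact hpt w
  have hM : 0 ≤ ∫ w, ‖w - a‖ ∂ρ := integral_nonneg fun _ => norm_nonneg _
  rw [hmean, norm_smul, norm_inv, Real.norm_of_nonneg hZ0.le]
  calc Z⁻¹ * ‖∫ w, f w • (w - a) ∂ρ‖ ≤ Z⁻¹ * (A * Z + c * ∫ w, ‖w - a‖ ∂ρ) := by gcongr
    _ = A + c / Z * ∫ w, ‖w - a‖ ∂ρ := by field_simp
    _ ≤ A + c / m * ∫ w, ‖w - a‖ ∂ρ := by gcongr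

/-- Quantitative Laplace principle, second (localized) part (Lemma `lem:qlp`). -/
theorem stmt_11 {d : ℕ} (hd : 1 ≤ d)
    (β α η ν ginf R0 : ℝ) (hβ : 0 < β) (hα : 0 < α) (hη : 0 < η) (hν : 0 < ν)
    (hginf : 0 < ginf) (hR0 : 0 < R0)
    (g : EuclideanSpace ℝ (Fin d) → ℝ) (hg : Continuous g)
    (vstar : EuclideanSpace ℝ (Fin d))
    (ρ : Measure (EuclideanSpace ℝ (Fin d))) (hρ : IsProbabilityMeasure ρ)
    (hsupp : ∀ r > (0:ℝ), 0 < ρ (Metric.closedBall vstar r))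
    (hmom : Integrable (fun v => ‖v - vstar‖) ρ)
    (hgrow : ∀ v ∈ Metric.closedBall vstar R0,
      (η * ‖v - vstar‖) ^ ((1:ℝ)/ν) - β ≤ g v - g vstar)
    (hout : ∀ v ∉ Metric.closedBall vstar R0, ginf < g v - g vstar)
    (vα : EuclideanSpace ℝ (Fin d))
    (hvα : vα = (∫ w, Real.exp (-α * g w) ∂ρ)⁻¹ • ∫ w, Real.exp (-α * g w) • w ∂ρ) :
    ∀ r : ℝ, 0 < r → r ≤ R0 → ∀ q > β,
      q - β + (sSup (g '' Metric.closedBall vstar r) - g vstar) ≤ ginf →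
      ‖vα - vstar‖
        ≤ (q + (sSup (g '' Metric.closedBall vstar r) - g vstar)) ^ ν / η
          + (Real.exp (-α * (q - β)) / (ρ (Metric.closedBall vstar r)).toReal)
            * ∫ v, ‖v - vstar‖ ∂ρ := by
  intro r hr hrR q hq hqg
  set S := sSup (g '' closedBall vstar r)
  have hle : ∀ w ∈ closedBall vstar r, g w ≤ S := fun w hw =>
    le_csSup ((isCompact_closedBall vstar r).image hg).bddAbove ⟨w, hw, rfl⟩
  have hS : g vstar ≤ S := hle vstar (mem_closedBall_self hr.le)
  have hqS : 0 < q + (S - g vstar) := by linarith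
  have hlow : ∀ w, g vstar - β ≤ g w := by
    intro w
    by_cases hw : w ∈ closedBall vstar R0
    · have h0 : 0 ≤ (η * ‖w - vstar‖) ^ ((1:ℝ)/ν) := by positivity
      linarith [hgrow w hw]
    · linarith [hout w hw]
  have hfar : ∀ w, (q + (S - g vstar)) ^ ν / η < ‖w - vstar‖ → q - β + S ≤ g w := by
    intro w hw
    by_cases hwR : w ∈ closedBall vstar R0
    · have h1 : (q + (S - g vstar)) ^ ν < η * ‖w - vstar‖ := by
        rwa [div_lt_iff₀' hη] at hw
      have h2 := Real.rpow_lt_rpow (by positivity) h1 (one_div_pos.mpr hν)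
      rw [one_div, Real.rpow_rpow_inv hqS.le hν.ne', ← one_div] at h2
      linarith [hgrow w hwR]
    · linarith [hout w hwR]
  have hcont : Continuous fun w => Real.exp (-α * g w) := by fun_prop
  have hbdd : ∀ w, ‖Real.exp (-α * g w)‖ ≤ Real.exp (-α * (g vstar - β)) := by
    intro w
    rw [Real.norm_of_nonneg (Real.exp_nonneg _), Real.exp_le_exp]
    nlinarith [hlow w]
  have hint : Integrable (fun w => Real.exp (-α * g w)) ρ :=
    .of_bound hcont.aestronglyMeasurable _ (.of_forall hbdd)
  have hid : Integrable (fun w => w - vstar) ρ :=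
    (integrable_norm_iff (by fun_prop)).mp hmom
  have hintw : Integrable (fun w => Real.exp (-α * g w) • (w - vstar)) ρ :=
    hid.bdd_smul _ hcont.aestronglyMeasurable (.of_forall hbdd)
  have hball : 0 < (ρ (closedBall vstar r)).toReal :=
    ENNReal.toReal_pos (hsupp r hr).ne' (measure_ne_top _ _)
  have hmass : Real.exp (-α * S) * (ρ (closedBall vstar r)).toReal
      ≤ ∫ w, Real.exp (-α * g w) ∂ρ := by
    refine (setIntegral_ge_of_const_le_real (μ := ρ) measurableSet_closedBall
      (measure_ne_top _ _) (fun w hw => ?_) hint.integrableOn).trans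
      (setIntegral_le_integral hint (.of_forall fun _ => Real.exp_nonneg _))
    rw [Real.exp_le_exp]
    nlinarith [hle w hw]
  have hpt : ∀ w, Real.exp (-α * g w) * ‖w - vstar‖
      ≤ (q + (S - g vstar)) ^ ν / η * Real.exp (-α * g w)
        + Real.exp (-α * (q - β + S)) * ‖w - vstar‖ := by
    intro w
    rcases le_or_gt ‖w - vstar‖ ((q + (S - g vstar)) ^ ν / η) with h | h
    · rw [mul_comm]
      exact le_add_of_le_of_nonneg (by gcongr) (by positivity)
    · refine le_add_of_nonneg_of_le (by positivity) ?_
      gcongr ?_ * _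
      rw [Real.exp_le_exp]
      nlinarith [hfar w h]
  have hratio : Real.exp (-α * (q - β + S)) / (Real.exp (-α * S) * (ρ (closedBall vstar r)).toReal)
      = Real.exp (-α * (q - β)) / (ρ (closedBall vstar r)).toReal := by
    rw [mul_add, Real.exp_add]
    field_simp
  rw [hvα, ← hratio]
  exact norm_weightedMean_sub_le (fun _ => Real.exp_nonneg _) hint hintw hmom (Real.exp_nonneg _)
    (by positivity) hmass hpt
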